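/- arXiv:1110.6140 — 2 statements merged into one kernel-verified Lean document; each statement's English description precedes it below -/
import Mathlib

section
/- Let C ⊆ [0,1] be the middle-thirds Cantor set and let F₀ = {(1−t)·(c,1) + t·(1/2,0) : c ∈ C, t ∈ [0,1]} ⊆ ℝ² be the Cantor fan, the union of the line segments joining each point (c,1), c ∈ C, to the apex (1/2,0). Then F₀ is a dendroid, F₀ is not a dendrite, and the subspace F₀ is contractible. -/
open Set Metric

section TopDefs

variable {α : Type*} [TopologicalSpace α]

/-- `A ⊆ α` is an arc with endpoints `x` and `y`:
a homeomorphic (continuous injective) image of `[0,1]` sending `0 ↦ x`, `1 ↦ y`. -/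
def IsArc (A : Set α) (x y : α) : Prop :=
  ∃ f : Set.Icc (0:ℝ) 1 → α, Continuous f ∧ Function.Injective f ∧
    Set.range f = A ∧ f ⟨0, by norm_num⟩ = x ∧ f ⟨1, by norm_num⟩ = y

/-- A continuum: a nonempty compact connected set. -/
def IsContinuum (X : Set α) : Prop := IsCompact X ∧ IsConnected X

/-- Any two distinct points of `X` are endpoints of an arc contained in `X`. -/
def ArcwiseConnectedSet (X : Set α) : Prop :=
  ∀ x ∈ X, ∀ y ∈ X, x ≠ y → ∃ A, A ⊆ X ∧ IsArc A x y

/-- `X` is unicoherent: for all closed connected `A, B ⊆ X` with `A ∪ B = X`,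
the intersection `A ∩ B` is connected. -/
def UnicoherentSet (X : Set α) : Prop :=
  ∀ A B : Set α, A ⊆ X → B ⊆ X → IsClosed A → IsClosed B →
    IsConnected A → IsConnected B → A ∪ B = X → IsConnected (A ∩ B)

/-- Every subcontinuum of `X` is unicoherent. -/
def HereditarilyUnicoherent (X : Set α) : Prop :=
  ∀ Y, Y ⊆ X → IsContinuum Y → UnicoherentSet Y

/-- A dendroid: an arcwise connected, hereditarily unicoherent continuum. -/
def IsDendroid (X : Set α) : Prop :=
  IsContinuum X ∧ ArcwiseConnectedSet X ∧ HereditarilyUnicoherent X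

/-- The unit circle `S¹`. -/
def unitCircle : Set (EuclideanSpace ℝ (Fin 2)) := Metric.sphere 0 1

/-- A dendrite: a locally connected continuum containing no subset homeomorphic to `S¹`. -/
def IsDendrite (X : Set α) : Prop :=
  IsContinuum X ∧ LocallyConnectedSpace ↥X ∧
    ∀ S : Set α, S ⊆ X → IsEmpty (↥S ≃ₜ ↥unitCircle)

/-- `x` and `y` lie in the same arc-component of `Y`. -/
def SameArcComponent (Y : Set α) (x y : α) : Prop :=
  x = y ∨ ∃ A, A ⊆ Y ∧ IsArc A x y

/-- `x` is a ramification point of `X`: `X \ {x}` has at least three arc-components. -/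
def IsRamificationPoint (X : Set α) (x : α) : Prop :=
  x ∈ X ∧ ∃ u v w, u ∈ X \ {x} ∧ v ∈ X \ {x} ∧ w ∈ X \ {x} ∧
    ¬ SameArcComponent (X \ {x}) u v ∧ ¬ SameArcComponent (X \ {x}) u w ∧
    ¬ SameArcComponent (X \ {x}) v w

/-- A tree (as a continuum): a dendrite with finitely many ramification points. -/
def IsTreeContinuum (X : Set α) : Prop :=
  IsDendrite X ∧ {x | IsRamificationPoint X x}.Finite

end TopDefs

section CompDefs

/-- The rational open ball in `ℝ²` coded by `((q₁, q₂), r)`. -/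
def ballOfCode (c : (ℚ × ℚ) × ℚ) : Set (ℝ × ℝ) :=
  {x | dist x (((c.1.1 : ℝ), (c.1.2 : ℝ)) : ℝ × ℝ) < (c.2 : ℝ)}

/-- A closed set `F ⊆ ℝ²` is `Π⁰₁` if it is the complement of the union of the rational
open balls coded by some c.e. set of codes. -/
def IsPi01Closed (F : Set (ℝ × ℝ)) : Prop :=
  ∃ W : (ℚ × ℚ) × ℚ → Prop, REPred W ∧ F = Set.univ \ ⋃ c ∈ {c | W c}, ballOfCode c

/-- `F ⊆ ℝ²` is c.e. closed if the set of codes of rational open balls meeting `F` is c.e. -/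
def IsCEClosed (F : Set (ℝ × ℝ)) : Prop :=
  REPred (fun c : (ℚ × ℚ) × ℚ => (F ∩ ballOfCode c).Nonempty)

/-- A computable closed subset of `ℝ²`: both `Π⁰₁` and c.e. closed. -/
def IsComputableClosed (F : Set (ℝ × ℝ)) : Prop :=
  IsPi01Closed F ∧ IsCEClosed F

/-- A point of `ℝ²` is computable if the set of codes of rational open balls
containing it is c.e. -/
def IsComputablePoint (x : ℝ × ℝ) : Prop :=
  REPred (fun c : (ℚ × ℚ) × ℚ => x ∈ ballOfCode c)

end CompDefs

section PsiDefs

/-- A tree of binary strings: a set of finite binary strings closed under prefixes. -/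
def IsTreeOfStrings (T : Set (List Bool)) : Prop :=
  ∀ σ ∈ T, ∀ τ : List Bool, τ <+: σ → τ ∈ T

/-- The point `ψ(σ) ∈ ℝ²` associated with the binary string `σ`. -/
noncomputable def psiPt (σ : List Bool) : ℝ × ℝ :=
  ((3:ℝ) ^ (-(σ.length : ℤ)) / 2 +
      2 * ∑ i ∈ Finset.range σ.length,
        (if σ.getD i false then (3:ℝ) ^ (-((i : ℤ) + 1)) else 0),
    (2:ℝ) ^ (-(σ.length : ℤ)))

/-- The planar embedding `Ψ(T)` of a tree `T` of binary strings: the closure of the union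
of the segments from `ψ(σ⁻)` to `ψ(σ)` over nonempty `σ ∈ T` (together with the points
`ψ(σ)`, `σ ∈ T`, which makes no difference except for the degenerate trees `∅`, `{⟨⟩}`). -/
noncomputable def PsiSet (T : Set (List Bool)) : Set (ℝ × ℝ) :=
  closure (psiPt '' T ∪ ⋃ σ ∈ T, ⋃ (_ : σ ≠ []), segment ℝ (psiPt σ.dropLast) (psiPt σ))

end PsiDefs

/-- The middle-thirds Cantor set. -/
def middleThirdsCantorSet : Set ℝ :=
  {x | ∃ a : ℕ → Bool, x = ∑' i : ℕ, 2 * (if a i then (1:ℝ) else 0) * 3 ^ (-((i : ℤ) + 1))}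

/-- The Cantor fan: the union of the segments joining the points `(c, 1)`, `c` in the Cantor
set, to the apex `(1/2, 0)`. -/
def cantorFanSet : Set (ℝ × ℝ) :=
  {p | ∃ c ∈ middleThirdsCantorSet, ∃ t ∈ Set.Icc (0:ℝ) 1,
    p = (1 - t) • ((c, 1) : ℝ × ℝ) + t • ((1/2, 0) : ℝ × ℝ)}

/-! ### The Cantor set -/

noncomputable def digitSum (a : ℕ → Bool) : ℝ :=
  ∑' i : ℕ, 2 * (if a i then (1:ℝ) else 0) * 3 ^ (-((i : ℤ) + 1))

lemma cantor_eq_range : middleThirdsCantorSet = Set.range digitSum := by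
  ext x
  simp only [middleThirdsCantorSet, digitSum, Set.mem_setOf_eq, Set.mem_range, eq_comm]

lemma digitSum_continuous : Continuous digitSum := by
  have hs : Summable (fun i : ℕ => (2/3 : ℝ) * (1/3) ^ i) :=
    (summable_geometric_of_lt_one (by norm_num) (by norm_num)).mul_left _
  refine continuous_tsum ?_ hs ?_
  · intro i
    have h1 : Continuous (fun b : Bool => 2 * (if b then (1:ℝ) else 0) * 3 ^ (-((i : ℤ) + 1))) :=
      continuous_of_discreteTopology
    exact h1.comp (continuous_apply i)
  · intro n a
    have e : (3:ℝ) ^ (-((n : ℤ) + 1)) = (1/3) * (1/3) ^ n := by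
      rw [neg_add, zpow_add₀ (by norm_num), zpow_neg, zpow_natCast]
      simp [mul_comm]
    rw [e]
    have : (0:ℝ) < (1/3) ^ n := by positivity
    split_ifs
    · rw [Real.norm_of_nonneg (by positivity)]; linarith
    · simp only [mul_zero, zero_mul, norm_zero]; positivity

lemma cantor_compact : IsCompact middleThirdsCantorSet := by
  rw [cantor_eq_range]
  exact isCompact_range digitSum_continuous

lemma cantor_subset : middleThirdsCantorSet ⊆ cantorSet := by
  rw [cantor_eq_range]
  rintro _ ⟨a, rfl⟩
  convert ofDigits_bool_to_fin_three_mem_cantorSet a using 1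
  unfold digitSum Real.ofDigits
  congr 1
  ext i
  have e : (3:ℝ) ^ (-((i : ℤ) + 1)) = (3 ^ (i+1))⁻¹ := by
    rw [zpow_neg]; norm_cast
  rw [e]
  cases h : a i <;> simp [Real.ofDigitsTerm, h]

lemma no_interval_step {a b : ℝ} (hab : a < b) (h : Icc a b ⊆ cantorSet) :
    ∃ a' b' : ℝ, b' - a' = 3 * (b - a) ∧ Icc a' b' ⊆ cantorSet := by
  have h01 : ∀ y ∈ cantorSet, 0 ≤ y ∧ y ≤ 1 := fun y hy => cantorSet_subset_unitInterval hy
  have hs : ∀ x ∈ cantorSet, ∃ y ∈ cantorSet, x = y / 3 ∨ x = (2 + y) / 3 := by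
    intro x hx
    rw [cantorSet_eq_union_halves] at hx
    rcases hx with ⟨y, hy, rfl⟩ | ⟨y, hy, rfl⟩
    · exact ⟨y, hy, Or.inl rfl⟩
    · exact ⟨y, hy, Or.inr rfl⟩
  have hhalf : (1/2 : ℝ) ∉ cantorSet := by
    intro hx
    obtain ⟨y, hy, h | h⟩ := hs _ hx <;> have := h01 y hy <;> linarith
  have : b < 1/2 ∨ 1/2 < a := by
    by_contra! hc
    exact hhalf (h ⟨hc.2, hc.1⟩)
  rcases this with hb | ha
  · refine ⟨3 * a, 3 * b, by ring, ?_⟩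
    intro z hz
    obtain ⟨y, hy, e | e⟩ := hs (z/3) (h ⟨by linarith [hz.1], by linarith [hz.2]⟩)
    · have : z = y := by linarith
      rwa [this]
    · have := h01 y hy
      have := hz.2
      linarith
  · refine ⟨3 * a - 2, 3 * b - 2, by ring, ?_⟩
    intro z hz
    obtain ⟨y, hy, e | e⟩ := hs ((2+z)/3) (h ⟨by linarith [hz.1], by linarith [hz.2]⟩)
    · have := h01 y hy
      have := hz.1
      linarith
    · have : z = y := by linarith
      rwa [this]

lemma no_interval_len (n : ℕ) : ∀ a b : ℝ, a < b → Icc a b ⊆ cantorSet → 3 ^ n * (b - a) ≤ 1 := by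
  induction n with
  | zero =>
    intro a b hab h
    have h1 := cantorSet_subset_unitInterval (h (left_mem_Icc.2 hab.le))
    have h2 := cantorSet_subset_unitInterval (h (right_mem_Icc.2 hab.le))
    have := h1.1
    have := h2.2
    simp only [pow_zero]
    linarith
  | succ n ih =>
    intro a b hab h
    obtain ⟨a', b', e, h'⟩ := no_interval_step hab h
    have := ih a' b' (by linarith) h'
    rw [e] at this
    rw [pow_succ]
    linarith

lemma exists_gap {a b : ℝ} (hab : a < b) : ∃ v, a < v ∧ v < b ∧ v ∉ middleThirdsCantorSet := by
  by_contra! hc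
  have hsub : Icc (a + (b-a)/3) (a + 2*(b-a)/3) ⊆ cantorSet := by
    intro x hx
    exact cantor_subset (hc x (by linarith [hx.1]) (by linarith [hx.2]))
  have hd : 0 < (b - a)/3 := by linarith
  obtain ⟨n, hn⟩ := pow_unbounded_of_one_lt (1 / ((b-a)/3)) (by norm_num : (1:ℝ) < 3)
  have := no_interval_len n _ _ (by linarith) hsub
  rw [div_lt_iff₀ hd] at hn
  have e : (a + 2*(b-a)/3) - (a + (b-a)/3) = (b-a)/3 := by ring
  rw [e] at this
  linarith

lemma digit_zero_mem : (0:ℝ) ∈ middleThirdsCantorSet := ⟨fun _ => false, by simp⟩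

lemma digit_pow_mem (n : ℕ) : 2 * (3:ℝ) ^ (-((n : ℤ) + 1)) ∈ middleThirdsCantorSet := by
  refine ⟨fun i => decide (i = n), ?_⟩
  rw [tsum_eq_single n]
  · simp
  · intro i hi
    simp [hi]

lemma exists_small {ε : ℝ} (hε : 0 < ε) : ∃ c ∈ middleThirdsCantorSet, 0 < c ∧ c < ε := by
  obtain ⟨n, hn⟩ := exists_pow_lt_of_lt_one hε (by norm_num : (1/3:ℝ) < 1)
  refine ⟨_, digit_pow_mem n, by positivity, ?_⟩
  have e : (3:ℝ) ^ (-((n : ℤ) + 1)) = (1/3) * (1/3) ^ n := by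
    rw [neg_add, zpow_add₀ (by norm_num), zpow_neg, zpow_natCast]
    simp [mul_comm]
  rw [e]
  have : (0:ℝ) < (1/3) ^ n := by positivity
  linarith

/-! ### The fan -/

/-- The point at height `h` on the leg of the fan with foot `c`. -/
noncomputable def fanPt (c h : ℝ) : ℝ × ℝ := (1/2 + h * (c - 1/2), h)

lemma fanPt_continuous : Continuous (fun q : ℝ × ℝ => fanPt q.1 q.2) := by
  unfold fanPt; fun_prop

lemma mem_fan {p : ℝ × ℝ} : p ∈ cantorFanSet ↔
    ∃ c ∈ middleThirdsCantorSet, ∃ h, 0 ≤ h ∧ h ≤ 1 ∧ p = fanPt c h := by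
  constructor
  · rintro ⟨c, hc, t, ht, rfl⟩
    refine ⟨c, hc, 1 - t, by linarith [ht.2], by linarith [ht.1], ?_⟩
    ext <;> simp [fanPt] <;> ring
  · rintro ⟨c, hc, h, h0, h1, rfl⟩
    refine ⟨c, hc, 1 - h, ⟨by linarith, by linarith⟩, ?_⟩
    ext <;> simp [fanPt] <;> ring

lemma fanPt_mem {c h : ℝ} (hc : c ∈ middleThirdsCantorSet) (h0 : 0 ≤ h) (h1 : h ≤ 1) :
    fanPt c h ∈ cantorFanSet := mem_fan.2 ⟨c, hc, h, h0, h1, rfl⟩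

lemma fan_compact : IsCompact cantorFanSet := by
  have : cantorFanSet = (fun q : ℝ × ℝ => fanPt q.1 q.2) '' (middleThirdsCantorSet ×ˢ Icc 0 1) := by
    ext p
    rw [mem_fan]
    constructor
    · rintro ⟨c, hc, h, h0, h1, rfl⟩
      exact ⟨(c, h), ⟨hc, h0, h1⟩, rfl⟩
    · rintro ⟨⟨c, h⟩, ⟨hc, h0, h1⟩, rfl⟩
      exact ⟨c, hc, h, h0, h1, rfl⟩
  rw [this]
  exact (cantor_compact.prod isCompact_Icc).image fanPt_continuous

lemma apex_eq (c c' : ℝ) : fanPt c 0 = fanPt c' 0 := by simp [fanPt]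

lemma fan_star : StarConvex ℝ (fanPt 0 0) cantorFanSet := by
  intro p hp a b ha hb hab
  obtain ⟨c, hc, h, h0, h1, rfl⟩ := mem_fan.1 hp
  refine mem_fan.2 ⟨c, hc, b * h, by positivity, ?_, ?_⟩
  · nlinarith
  · have : a = 1 - b := by linarith
    subst this
    ext <;> simp [fanPt] <;> ring

lemma fan_arcwise : ArcwiseConnectedSet cantorFanSet := by
  intro p hp q hq hpq
  obtain ⟨c, hc, s, s0, s1, rfl⟩ := mem_fan.1 hp
  obtain ⟨c', hc', s', s0', s1', rfl⟩ := mem_fan.1 hq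
  by_cases hcc : c = c'
  · subst hcc
    have hss : s ≠ s' := fun h => hpq (by rw [h])
    let f : Icc (0:ℝ) 1 → ℝ × ℝ := fun t => fanPt c (s + t * (s' - s))
    refine ⟨Set.range f, ?_, f, ?_, ?_, rfl, ?_, ?_⟩
    · rintro _ ⟨⟨t, t0, t1⟩, rfl⟩
      apply fanPt_mem hc
      · change 0 ≤ s + t * (s' - s)
        nlinarith
      · change s + t * (s' - s) ≤ 1
        nlinarith
    · change Continuous (fun t : Icc (0:ℝ) 1 => fanPt c (s + t * (s' - s)))
      unfold fanPt; fun_prop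
    · intro t u htu
      have h2 : s + (t:ℝ) * (s' - s) = s + u * (s' - s) := congrArg Prod.snd htu
      have h3 : (t:ℝ) * (s' - s) = u * (s' - s) := by linarith
      exact Subtype.ext (mul_right_cancel₀ (sub_ne_zero.2 hss.symm) h3)
    · simp [f]
    · simp [f]
  · have hpos : 0 < s + s' := by
      by_contra! hle
      have e1 : s = 0 := by linarith
      have e2 : s' = 0 := by linarith
      subst e1 e2
      exact hpq (apex_eq _ _)
    let g : ℝ → ℝ × ℝ := fun h => (1/2 + max h 0 * (c - 1/2) + max (-h) 0 * (c' - 1/2), |h|)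
    have gpos : ∀ h, 0 ≤ h → g h = fanPt c h := by
      intro h hh
      simp [g, fanPt, hh, abs_of_nonneg]
    have gneg : ∀ h, h ≤ 0 → g h = fanPt c' (-h) := by
      intro h hh
      simp [g, fanPt, hh, abs_of_nonpos]
    have ginj : Function.Injective g := by
      intro x y hxy
      have h2 : |x| = |y| := congrArg Prod.snd hxy
      have key : ∀ z : ℝ, 0 ≤ z → g z = g (-z) → z = 0 := by
        intro z hz h
        rw [gpos z hz, gneg (-z) (by linarith)] at h
        have h3 := congrArg Prod.fst h
        simp only [fanPt, neg_neg] at h3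
        have h4 : z * (c - c') = 0 := by linarith
        exact (mul_eq_zero.1 h4).resolve_right (sub_ne_zero.2 hcc)
      rcases abs_eq_abs.1 h2 with h | h
      · exact h
      · rcases le_total 0 y with hy | hy
        · have := key y hy (by rw [← h, hxy])
          linarith
        · have := key x (by linarith) (by rw [hxy, h, neg_neg])
          linarith
    have gcont : Continuous g := by
      change Continuous (fun h : ℝ => ((1/2 + max h 0 * (c - 1/2) + max (-h) 0 * (c' - 1/2), |h|) : ℝ × ℝ))
      fun_prop
    let f : Icc (0:ℝ) 1 → ℝ × ℝ := fun t => g (s - t * (s + s'))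
    refine ⟨Set.range f, ?_, f, ?_, ?_, rfl, ?_, ?_⟩
    · rintro _ ⟨⟨t, t0, t1⟩, rfl⟩
      change g (s - t * (s + s')) ∈ _
      rcases le_total 0 (s - t * (s + s')) with hh | hh
      · rw [gpos _ hh]
        exact fanPt_mem hc hh (by nlinarith)
      · rw [gneg _ hh]
        exact fanPt_mem hc' (by linarith) (by nlinarith)
    · exact gcont.comp (by fun_prop)
    · intro t u htu
      have h2 := ginj htu
      have h3 : (t:ℝ) * (s + s') = u * (s + s') := by linarith
      exact Subtype.ext (mul_right_cancel₀ hpos.ne' h3)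
    · simp only [f, zero_mul, sub_zero]
      exact gpos s s0
    · have e : s - 1 * (s + s') = -s' := by ring
      simp only [f, e]
      rw [gneg _ (by linarith), neg_neg]

/-- A connected subset of the fan meeting two legs contains the apex. -/
lemma apex_mem_aux {K : Set (ℝ × ℝ)} (hK : K ⊆ cantorFanSet) (hc : IsPreconnected K)
    {c s c' s' : ℝ} (h1 : fanPt c s ∈ K) (h2 : fanPt c' s' ∈ K) (hs : 0 ≤ s) (hs' : 0 ≤ s')
    (hlt : c < c') : fanPt 0 0 ∈ K := by
  by_contra hap
  obtain ⟨v, hv1, hv2, hv⟩ := exists_gap hlt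
  have hpos : ∀ d h, 0 ≤ h → fanPt d h ∈ K → 0 < h := by
    intro d h hh hm
    rcases hh.eq_or_lt with e | e
    · subst e
      rw [apex_eq d 0] at hm
      exact absurd hm hap
    · exact e
  let U : Set (ℝ × ℝ) := {p | p.1 < 1/2 + p.2 * (v - 1/2)}
  let V : Set (ℝ × ℝ) := {p | 1/2 + p.2 * (v - 1/2) < p.1}
  have hU : IsOpen U := isOpen_lt (by fun_prop) (by fun_prop)
  have hV : IsOpen V := isOpen_lt (by fun_prop) (by fun_prop)
  have hdis : Disjoint U V := by
    rw [Set.disjoint_left]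
    intro p hp hp'
    have hq : p.1 < 1/2 + p.2 * (v - 1/2) := hp
    have hq' : 1/2 + p.2 * (v - 1/2) < p.1 := hp'
    linarith
  have hcov : K ⊆ U ∪ V := by
    intro p hp
    obtain ⟨d, hd, h, h0, -, rfl⟩ := mem_fan.1 (hK hp)
    have hh := hpos d h h0 hp
    have hne : d ≠ v := fun e => hv (e ▸ hd)
    rcases lt_or_gt_of_ne hne with hl | hl
    · left
      change 1/2 + h * (d - 1/2) < 1/2 + h * (v - 1/2)
      nlinarith
    · right
      change 1/2 + h * (v - 1/2) < 1/2 + h * (d - 1/2)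
      nlinarith
  have p1 := hpos _ _ hs h1
  have p2 := hpos _ _ hs' h2
  have m1 : fanPt c s ∈ U := by
    change 1/2 + s * (c - 1/2) < 1/2 + s * (v - 1/2)
    nlinarith
  have m2 : fanPt c' s' ∈ V := by
    change 1/2 + s' * (v - 1/2) < 1/2 + s' * (c' - 1/2)
    nlinarith
  rcases hc.subset_or_subset hU hV hdis hcov with h | h
  · exact Set.disjoint_left.1 hdis (h h2) m2
  · exact Set.disjoint_left.1 hdis m1 (h h1)

lemma apex_mem {K : Set (ℝ × ℝ)} (hK : K ⊆ cantorFanSet) (hc : IsPreconnected K)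
    {c s c' s' : ℝ} (h1 : fanPt c s ∈ K) (h2 : fanPt c' s' ∈ K) (hs : 0 ≤ s) (hs' : 0 ≤ s')
    (hne : c ≠ c') : fanPt 0 0 ∈ K := by
  rcases lt_or_gt_of_ne hne with h | h
  · exact apex_mem_aux hK hc h1 h2 hs hs' h
  · exact apex_mem_aux hK hc h2 h1 hs' hs h

/-- A closed connected subset of the fan meets each leg in an order-convex set. -/
lemma leg_convex {K : Set (ℝ × ℝ)} (hK : K ⊆ cantorFanSet) (hcl : IsClosed K)
    (hc : IsPreconnected K) {c s s' r : ℝ}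
    (h1 : fanPt c s ∈ K) (h2 : fanPt c s' ∈ K) (hs : 0 ≤ s) (hsr : s ≤ r) (hrs : r ≤ s') :
    fanPt c r ∈ K := by
  by_contra hr
  have hsr' : s < r := lt_of_le_of_ne hsr (fun e => hr (e ▸ h1))
  have hrs' : r < s' := lt_of_le_of_ne hrs (fun e => hr (e ▸ h2))
  have hr0 : 0 < r := by linarith
  have hopen : IsOpen {d : ℝ | fanPt d r ∉ K} := by
    have hcont : Continuous (fun d : ℝ => fanPt d r) := by unfold fanPt; fun_prop
    exact hcl.isOpen_compl.preimage hcont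
  obtain ⟨ε, hε, hball⟩ := Metric.isOpen_iff.1 hopen c hr
  obtain ⟨u, hu1, hu2, hu⟩ := exists_gap (show c - ε < c by linarith)
  obtain ⟨v, hv1, hv2, hv⟩ := exists_gap (show c < c + ε by linarith)
  let U : Set (ℝ × ℝ) := {p | r < p.2} ∩ ({p | 1/2 + p.2 * (u - 1/2) < p.1} ∩
    {p | p.1 < 1/2 + p.2 * (v - 1/2)})
  let V : Set (ℝ × ℝ) := {p | p.2 < r} ∪ ({p | p.1 < 1/2 + p.2 * (u - 1/2)} ∪
    {p | 1/2 + p.2 * (v - 1/2) < p.1})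
  have hU : IsOpen U := (isOpen_lt (by fun_prop) (by fun_prop)).inter
    ((isOpen_lt (by fun_prop) (by fun_prop)).inter (isOpen_lt (by fun_prop) (by fun_prop)))
  have hV : IsOpen V := (isOpen_lt (by fun_prop) (by fun_prop)).union
    ((isOpen_lt (by fun_prop) (by fun_prop)).union (isOpen_lt (by fun_prop) (by fun_prop)))
  have hdis : Disjoint U V := by
    rw [Set.disjoint_left]
    rintro p ⟨ha, hb, hb'⟩ (hp | hp | hp)
    all_goals
      simp only [Set.mem_setOf_eq] at ha hb hb' hp
      linarith
  have hcov : K ⊆ U ∪ V := by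
    intro p hp
    obtain ⟨d, hd, h, h0, -, rfl⟩ := mem_fan.1 (hK hp)
    have hnu : d ≠ u := fun e => hu (e ▸ hd)
    have hnv : d ≠ v := fun e => hv (e ▸ hd)
    rcases lt_or_ge h r with hh | hh
    · exact Or.inr (Or.inl hh)
    rcases lt_or_gt_of_ne hnu with hl | hl
    · right; right; left
      change 1/2 + h * (d - 1/2) < 1/2 + h * (u - 1/2)
      nlinarith
    rcases lt_or_gt_of_ne hnv with hl' | hl'
    · left
      have hhr : r < h := by
        refine lt_of_le_of_ne hh ?_
        rintro rfl
        have : d ∈ Metric.ball c ε := by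
          rw [Metric.mem_ball, Real.dist_eq, abs_lt]
          constructor <;> linarith
        exact hball this hp
      refine ⟨hhr, ?_, ?_⟩
      · change 1/2 + h * (u - 1/2) < 1/2 + h * (d - 1/2)
        nlinarith
      · change 1/2 + h * (d - 1/2) < 1/2 + h * (v - 1/2)
        nlinarith
    · right; right; right
      change 1/2 + h * (v - 1/2) < 1/2 + h * (d - 1/2)
      nlinarith
  have m1 : fanPt c s ∈ V := Or.inl hsr'
  have m2 : fanPt c s' ∈ U := by
    refine ⟨hrs', ?_, ?_⟩
    · change 1/2 + s' * (u - 1/2) < 1/2 + s' * (c - 1/2)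
      nlinarith
    · change 1/2 + s' * (c - 1/2) < 1/2 + s' * (v - 1/2)
      nlinarith
  rcases hc.subset_or_subset hU hV hdis hcov with h | h
  · exact Set.disjoint_left.1 hdis (h h1) m1
  · exact Set.disjoint_left.1 hdis m2 (h h2)

lemma leg_image_preconnected (c s s' : ℝ) : IsPreconnected (fanPt c '' Icc s s') := by
  have hcont : Continuous (fanPt c) := by unfold fanPt; fun_prop
  exact isPreconnected_Icc.image _ hcont.continuousOn

lemma fan_inter_preconnected {A B : Set (ℝ × ℝ)} (hA : A ⊆ cantorFanSet) (hB : B ⊆ cantorFanSet)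
    (cA : IsClosed A) (cB : IsClosed B) (pA : IsPreconnected A) (pB : IsPreconnected B) :
    IsPreconnected (A ∩ B) := by
  have seg : ∀ c s s', 0 ≤ s → fanPt c s ∈ A ∩ B → fanPt c s' ∈ A ∩ B →
      fanPt c '' Icc s s' ⊆ A ∩ B := by
    rintro c s s' hs h1 h2 _ ⟨r, hr, rfl⟩
    exact ⟨leg_convex hA cA pA h1.1 h2.1 hs hr.1 hr.2, leg_convex hB cB pB h1.2 h2.2 hs hr.1 hr.2⟩
  apply isPreconnected_of_forall_pair
  intro p hp q hq
  obtain ⟨c, hc, s, s0, s1, rfl⟩ := mem_fan.1 (hA hp.1)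
  obtain ⟨c', hc', s', s0', s1', rfl⟩ := mem_fan.1 (hA hq.1)
  by_cases hcc : c = c'
  · subst hcc
    rcases le_total s s' with h | h
    · exact ⟨_, seg c s s' s0 hp hq, ⟨s, left_mem_Icc.2 h, rfl⟩, ⟨s', right_mem_Icc.2 h, rfl⟩,
        leg_image_preconnected _ _ _⟩
    · exact ⟨_, seg c s' s s0' hq hp, ⟨s, right_mem_Icc.2 h, rfl⟩, ⟨s', left_mem_Icc.2 h, rfl⟩,
        leg_image_preconnected _ _ _⟩
  · have hap : fanPt 0 0 ∈ A ∩ B :=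
      ⟨apex_mem hA pA hp.1 hq.1 s0 s0' hcc, apex_mem hB pB hp.2 hq.2 s0 s0' hcc⟩
    refine ⟨fanPt c '' Icc 0 s ∪ (fanPt c') '' Icc 0 s', ?_, ?_, ?_, ?_⟩
    · apply Set.union_subset
      · exact seg c 0 s le_rfl (by rwa [apex_eq c 0]) hp
      · exact seg c' 0 s' le_rfl (by rwa [apex_eq c' 0]) hq
    · exact Or.inl ⟨s, right_mem_Icc.2 s0, rfl⟩
    · exact Or.inr ⟨s', right_mem_Icc.2 s0', rfl⟩
    · exact IsPreconnected.union (fanPt 0 0) ⟨0, left_mem_Icc.2 s0, apex_eq _ _⟩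
        ⟨0, left_mem_Icc.2 s0', apex_eq _ _⟩
        (leg_image_preconnected _ _ _) (leg_image_preconnected _ _ _)

lemma fan_hereditarilyUnicoherent : HereditarilyUnicoherent cantorFanSet := by
  intro Y hY hYc A B hA hB cA cB pA pB hAB
  refine ⟨?_, fan_inter_preconnected (hA.trans hY) (hB.trans hY) cA cB
    pA.isPreconnected pB.isPreconnected⟩
  obtain ⟨x, -, hx⟩ := isPreconnected_closed_iff.1 hYc.2.isPreconnected A B cA cB hAB.ge
    (by rw [Set.inter_eq_right.2 hA]; exact pA.nonempty)
    (by rw [Set.inter_eq_right.2 hB]; exact pB.nonempty)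
  exact ⟨x, hx⟩

lemma fan_not_locallyConnected : ¬ LocallyConnectedSpace ↥cantorFanSet := by
  intro hl
  rw [locallyConnectedSpace_iff_subsets_isOpen_isConnected] at hl
  have hx : fanPt 0 1 ∈ cantorFanSet := fanPt_mem digit_zero_mem zero_le_one le_rfl
  have hO : IsOpen {p : cantorFanSet | 0 < (p : ℝ × ℝ).2} :=
    isOpen_lt (by fun_prop) (by fun_prop)
  obtain ⟨V, hVU, hVo, hxV, hVc⟩ := hl ⟨_, hx⟩ _ (hO.mem_nhds (by simp [fanPt]))
  obtain ⟨W, hW, rfl⟩ := isOpen_induced_iff.1 hVo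
  have hcont : Continuous (fun d : ℝ => fanPt d 1) := by unfold fanPt; fun_prop
  obtain ⟨ε, hε, hball⟩ := Metric.isOpen_iff.1 (hW.preimage hcont) 0 hxV
  obtain ⟨c, hc, hc0, hcε⟩ := exists_small hε
  have hcW : fanPt c 1 ∈ W := hball (by
    rw [Metric.mem_ball, Real.dist_eq, abs_lt]; constructor <;> linarith)
  have hpre : IsPreconnected ((Subtype.val : cantorFanSet → ℝ × ℝ) '' (Subtype.val ⁻¹' W)) :=
    hVc.isPreconnected.image _ continuous_subtype_val.continuousOn
  have hap := apex_mem (c := 0) (s := 1) (c' := c) (s' := 1)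
    (by rintro _ ⟨p, -, rfl⟩; exact p.2) hpre ⟨⟨_, hx⟩, hxV, rfl⟩
    ⟨⟨_, fanPt_mem hc zero_le_one le_rfl⟩, hcW, rfl⟩ zero_le_one zero_le_one hc0.ne
  obtain ⟨p, hp, e⟩ := hap
  have h1 : 0 < (p : ℝ × ℝ).2 := hVU hp
  rw [e] at h1
  simp [fanPt] at h1

theorem cantorFan_dendroid_not_dendrite_contractible :
    IsDendroid cantorFanSet ∧ ¬ IsDendrite cantorFanSet ∧ ContractibleSpace ↥cantorFanSet := by
  have hap : fanPt 0 0 ∈ cantorFanSet := fanPt_mem digit_zero_mem le_rfl zero_le_one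
  exact ⟨⟨⟨fan_compact, (fan_star.isPathConnected hap).isConnected⟩, fan_arcwise,
    fan_hereditarilyUnicoherent⟩, fun h => fan_not_locallyConnected h.2.1,
    fan_star.contractibleSpace ⟨_, hap⟩⟩
end

section
/- For every nonempty tree of binary strings T ⊆ 2^{<ℕ} (possibly infinite), the set Ψ(T) ⊆ ℝ² is a dendrite. -/
open Set Metric

/-- The two similarities generating the tree embedding. -/
noncomputable def fb (b : Bool) (p : ℝ × ℝ) : ℝ × ℝ :=
  (p.1 / 3 + (if b then 2 / 3 else 0), p.2 / 2)

/-- The root point. -/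
noncomputable def rootPt : ℝ × ℝ := (1 / 2, 1)

def subT (b : Bool) (T : Set (List Bool)) : Set (List Bool) := {τ | b :: τ ∈ T}

noncomputable def RawSet (T : Set (List Bool)) : Set (ℝ × ℝ) :=
  psiPt '' T ∪ ⋃ σ ∈ T, ⋃ (_ : σ ≠ []), segment ℝ (psiPt σ.dropLast) (psiPt σ)

theorem psiPt_nil : psiPt [] = rootPt := by
  simp [psiPt, rootPt]

theorem psiPt_cons (b : Bool) (σ : List Bool) : psiPt (b :: σ) = fb b (psiPt σ) := by
  have h3 : (3:ℝ) ≠ 0 := by norm_num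
  have h2 : (2:ℝ) ≠ 0 := by norm_num
  have e3 : ∀ k : ℤ, (3:ℝ) ^ (-(k + 1)) = 3 ^ (-k) / 3 := by
    intro k
    rw [neg_add, zpow_add₀ h3]; simp [div_eq_mul_inv]
  have e2 : ∀ k : ℤ, (2:ℝ) ^ (-(k + 1)) = 2 ^ (-k) / 2 := by
    intro k
    rw [neg_add, zpow_add₀ h2]; simp [div_eq_mul_inv]
  unfold psiPt fb
  refine Prod.ext ?_ ?_
  · simp only [List.length_cons, Finset.sum_range_succ']
    have hs : ∑ k ∈ Finset.range σ.length,
        (if (b :: σ).getD (k + 1) false = true then (3:ℝ) ^ (-(((k + 1 : ℕ) : ℤ) + 1)) else 0)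
        = (∑ k ∈ Finset.range σ.length,
        (if σ.getD k false = true then (3:ℝ) ^ (-((k : ℤ) + 1)) else 0)) / 3 := by
      rw [Finset.sum_div]
      refine Finset.sum_congr rfl fun k _ => ?_
      simp only [List.getD_cons_succ]
      split_ifs
      · rw [e3]; push_cast; rfl
      · simp
    rw [hs]
    push_cast
    rw [e3]
    cases b <;> simp <;> ring
  · simp only [List.length_cons]
    push_cast
    rw [e2]

theorem fb_continuous (b : Bool) : Continuous (fb b) := by
  unfold fb; fun_prop

theorem fb_segment (b : Bool) (p q : ℝ × ℝ) :
    fb b '' segment ℝ p q = segment ℝ (fb b p) (fb b q) := by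
  rw [segment_eq_image, segment_eq_image, Set.image_image]
  refine Set.image_congr fun t _ => ?_
  refine Prod.ext ?_ ?_
  · simp [fb]; ring
  · simp [fb]; ring

theorem fb_dist (b : Bool) (p q : ℝ × ℝ) : dist (fb b p) (fb b q) ≤ dist p q / 2 := by
  have h1 : dist p.1 q.1 ≤ dist p q := by rw [Prod.dist_eq]; exact le_max_left _ _
  have h2 : dist p.2 q.2 ≤ dist p q := by rw [Prod.dist_eq]; exact le_max_right _ _
  rw [Prod.dist_eq]
  rw [Real.dist_eq] at h1 h2
  refine max_le ?_ ?_
  · simp only [fb, Real.dist_eq]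
    have : p.1 / 3 + (if b = true then (2:ℝ) / 3 else 0) -
      (q.1 / 3 + if b = true then 2 / 3 else 0) = (p.1 - q.1) / 3 := by ring
    rw [this, abs_div, abs_of_pos (by norm_num : (0:ℝ) < 3)]
    linarith [abs_nonneg (p.1 - q.1)]
  · simp only [fb, Real.dist_eq]
    rw [← sub_div, abs_div, abs_of_pos (by norm_num : (0:ℝ) < 2)]
    linarith

/-- The inverse of `fb`. -/
noncomputable def gb (b : Bool) (p : ℝ × ℝ) : ℝ × ℝ :=
  ((p.1 - (if b then 2 / 3 else 0)) * 3, p.2 * 2)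

theorem gb_continuous (b : Bool) : Continuous (gb b) := by
  unfold gb; fun_prop

theorem gb_fb (b : Bool) (p : ℝ × ℝ) : gb b (fb b p) = p := by
  refine Prod.ext ?_ ?_
  · simp [fb, gb]
  · simp [fb, gb]

theorem fb_gb (b : Bool) (p : ℝ × ℝ) : fb b (gb b p) = p := by
  refine Prod.ext ?_ ?_
  · simp [fb, gb]
  · simp [fb, gb]

theorem subT_tree {T : Set (List Bool)} (hT : IsTreeOfStrings T) (b : Bool) :
    IsTreeOfStrings (subT b T) := by
  intro σ hσ τ hτ
  exact hT _ hσ _ (by simpa using hτ)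

theorem nil_mem {T : Set (List Bool)} (hT : IsTreeOfStrings T) (hne : T.Nonempty) : [] ∈ T := by
  obtain ⟨σ, hσ⟩ := hne
  exact hT σ hσ [] (List.nil_prefix)

theorem psiSet_eq (T : Set (List Bool)) : PsiSet T = closure (RawSet T) := rfl

abbrev unitSq : Set (ℝ × ℝ) := Icc 0 1

theorem psiPt_mem (σ : List Bool) : psiPt σ ∈ unitSq := by
  induction σ with
  | nil => rw [psiPt_nil]; simp [rootPt, unitSq, Prod.le_def]; norm_num
  | cons b σ ih =>
    rw [psiPt_cons]
    simp only [unitSq, Set.mem_Icc, Prod.le_def, Prod.fst_zero, Prod.snd_zero, Prod.fst_one,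
      Prod.snd_one] at ih ⊢
    obtain ⟨⟨a1, a2⟩, a3, a4⟩ := ih
    cases b <;> simp [fb] <;> refine ⟨⟨?_, ?_⟩, ?_, ?_⟩ <;> linarith

theorem rawSet_subset (T : Set (List Bool)) : RawSet T ⊆ unitSq := by
  refine Set.union_subset ?_ ?_
  · rintro _ ⟨σ, _, rfl⟩; exact psiPt_mem σ
  · refine Set.iUnion₂_subset fun σ _ => Set.iUnion_subset fun _ => ?_
    exact (convex_Icc (𝕜 := ℝ) (0 : ℝ × ℝ) 1).segment_subset (psiPt_mem _) (psiPt_mem _)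

theorem psiSet_subset (T : Set (List Bool)) : PsiSet T ⊆ unitSq :=
  closure_minimal (rawSet_subset T) isClosed_Icc

theorem psiSet_compact (T : Set (List Bool)) : IsCompact (PsiSet T) :=
  (isCompact_Icc (a := (0 : ℝ × ℝ)) (b := 1)).of_isClosed_subset isClosed_closure (psiSet_subset T)

theorem root_mem {T : Set (List Bool)} (hT : IsTreeOfStrings T) (hne : T.Nonempty) :
    rootPt ∈ PsiSet T :=
  subset_closure (Or.inl ⟨[], nil_mem hT hne, psiPt_nil⟩)

theorem singleton_mem {T : Set (List Bool)} (hT : IsTreeOfStrings T) {b : Bool} {τ : List Bool}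
    (h : b :: τ ∈ T) : [b] ∈ T := hT _ h _ (by simp)

theorem fb_raw (T : Set (List Bool)) (b : Bool) : fb b '' RawSet (subT b T) ⊆ RawSet T := by
  rintro _ ⟨p, hp, rfl⟩
  rcases hp with ⟨τ, hτ, rfl⟩ | hp
  · exact Or.inl ⟨b :: τ, hτ, psiPt_cons b τ⟩
  · simp only [Set.mem_iUnion] at hp
    obtain ⟨τ, hτ, hn, hp⟩ := hp
    refine Or.inr ?_
    simp only [Set.mem_iUnion]
    refine ⟨b :: τ, hτ, by simp, ?_⟩
    rw [List.dropLast_cons_of_ne_nil hn, psiPt_cons, psiPt_cons, ← fb_segment]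
    exact ⟨p, hp, rfl⟩

theorem psiSet_decomp {T : Set (List Bool)} (hT : IsTreeOfStrings T) (hne : T.Nonempty) :
    PsiSet T = {rootPt} ∪ ⋃ b ∈ {b | [b] ∈ T},
      (segment ℝ rootPt (fb b rootPt) ∪ fb b '' PsiSet (subT b T)) := by
  apply Set.Subset.antisymm
  · refine closure_minimal ?_ ?_
    · rintro p (⟨σ, hσ, rfl⟩ | hp)
      · cases σ with
        | nil => exact Or.inl psiPt_nil
        | cons b τ =>
          refine Or.inr ?_
          simp only [Set.mem_iUnion]
          refine ⟨b, singleton_mem hT hσ, Or.inr ⟨psiPt τ, ?_, (psiPt_cons b τ).symm⟩⟩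
          exact subset_closure (Or.inl ⟨τ, hσ, rfl⟩)
      · simp only [Set.mem_iUnion] at hp
        obtain ⟨σ, hσ, hn, hp⟩ := hp
        cases σ with
        | nil => exact absurd rfl hn
        | cons b τ =>
          refine Or.inr ?_
          simp only [Set.mem_iUnion]
          refine ⟨b, singleton_mem hT hσ, ?_⟩
          by_cases ht : τ = []
          · subst ht
            left
            simpa [psiPt_cons, psiPt_nil] using hp
          · right
            rw [List.dropLast_cons_of_ne_nil ht, psiPt_cons, psiPt_cons, ← fb_segment] at hp
            refine Set.image_mono ?_ hp
            refine Set.Subset.trans ?_ subset_closure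
            intro q hq
            refine Or.inr ?_
            simp only [Set.mem_iUnion]
            exact ⟨τ, hσ, ht, hq⟩
    · refine isClosed_singleton.union ?_
      refine Set.Finite.isClosed_biUnion (Set.toFinite _) fun b _ => ?_
      refine IsClosed.union ?_ ?_
      · rw [segment_eq_image]
        exact ((isCompact_Icc).image (by fun_prop)).isClosed
      · exact ((psiSet_compact _).image (fb_continuous b)).isClosed
  · refine Set.union_subset ?_ ?_
    · rintro _ rfl; exact root_mem hT hne
    · refine Set.iUnion₂_subset fun b hb => Set.union_subset ?_ ?_
      · refine Set.Subset.trans ?_ subset_closure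
        intro q hq
        refine Or.inr ?_
        simp only [Set.mem_iUnion]
        refine ⟨[b], hb, by simp, ?_⟩
        simpa [psiPt_cons, psiPt_nil] using hq
      · exact (image_closure_subset_closure_image (fb_continuous b)).trans
          (closure_mono (fb_raw T b))

theorem rawSet_connected {T : Set (List Bool)} (hT : IsTreeOfStrings T) (hne : T.Nonempty) :
    IsConnected (RawSet T) := by
  have h0 := nil_mem hT hne
  have key : ∀ σ : List Bool, σ ∈ T → ∃ A ⊆ RawSet T, psiPt [] ∈ A ∧ psiPt σ ∈ A ∧
      IsPreconnected A := by
    intro σ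
    induction σ using List.reverseRecOn with
    | nil =>
      intro h
      exact ⟨{psiPt []}, by rintro _ rfl; exact Or.inl ⟨[], h, rfl⟩, rfl, rfl,
        isPreconnected_singleton⟩
    | append_singleton τ b ih =>
      intro h
      obtain ⟨A, hA, h1, h2, h3⟩ := ih (hT _ h _ (by simp))
      refine ⟨A ∪ segment ℝ (psiPt τ) (psiPt (τ ++ [b])), ?_, Or.inl h1,
        Or.inr (right_mem_segment _ _ _), ?_⟩
      · refine Set.union_subset hA ?_
        intro q hq
        refine Or.inr ?_
        simp only [Set.mem_iUnion]
        exact ⟨τ ++ [b], h, by simp, by simpa using hq⟩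
      · exact IsPreconnected.union (psiPt τ) h2 (left_mem_segment _ _ _) h3
          (convex_segment _ _).isPreconnected
  refine ⟨⟨psiPt [], Or.inl ⟨[], h0, rfl⟩⟩, ?_⟩
  refine isPreconnected_of_forall (psiPt []) ?_
  rintro p (⟨σ, hσ, rfl⟩ | hp)
  · exact key σ hσ
  · simp only [Set.mem_iUnion] at hp
    obtain ⟨σ, hσ, hn, hp⟩ := hp
    obtain ⟨A, hA, h1, h2, h3⟩ := key σ hσ
    refine ⟨A ∪ segment ℝ (psiPt σ.dropLast) (psiPt σ), ?_, Or.inl h1, Or.inr hp, ?_⟩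
    · refine Set.union_subset hA ?_
      intro q hq
      refine Or.inr ?_
      simp only [Set.mem_iUnion]
      exact ⟨σ, hσ, hn, hq⟩
    · exact IsPreconnected.union (psiPt σ) h2 (right_mem_segment _ _ _) h3
          (convex_segment _ _).isPreconnected

theorem psiSet_connected {T : Set (List Bool)} (hT : IsTreeOfStrings T) (hne : T.Nonempty) :
    IsConnected (PsiSet T) := (rawSet_connected hT hne).closure

/-- `X` is a finite union of closed connected sets of diameter at most `ε`. -/
def HasS (ε : ℝ) (X : Set (ℝ × ℝ)) : Prop :=
  ∃ F : Set (Set (ℝ × ℝ)), F.Finite ∧ ⋃₀ F = X ∧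
    ∀ A ∈ F, IsClosed A ∧ IsPreconnected A ∧ ∀ x ∈ A, ∀ y ∈ A, dist x y ≤ ε

theorem HasS.union {ε : ℝ} {X Y : Set (ℝ × ℝ)} (hX : HasS ε X) (hY : HasS ε Y) :
    HasS ε (X ∪ Y) := by
  obtain ⟨F, hF, rfl, h⟩ := hX
  obtain ⟨G, hG, rfl, h'⟩ := hY
  refine ⟨F ∪ G, hF.union hG, Set.sUnion_union F G, ?_⟩
  rintro A (hA | hA)
  · exact h A hA
  · exact h' A hA

theorem HasS.empty (ε : ℝ) : HasS ε ∅ := ⟨∅, Set.finite_empty, by simp, by simp⟩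

theorem hasS_segment {ε : ℝ} (hε : 0 < ε) (p q : ℝ × ℝ) : HasS ε (segment ℝ p q) := by
  have hc : IsCompact (segment ℝ p q) := by
    rw [segment_eq_image]
    exact (isCompact_Icc).image (by fun_prop)
  obtain ⟨t, ht, hf, hcov⟩ := hc.finite_cover_balls (half_pos hε)
  refine ⟨(fun x => closedBall x (ε / 2) ∩ segment ℝ p q) '' t, hf.image _, ?_, ?_⟩
  · apply Set.Subset.antisymm
    · rintro x ⟨_, ⟨y, _, rfl⟩, hx⟩
      exact hx.2
    · intro x hx
      have := hcov hx
      simp only [Set.mem_iUnion] at this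
      obtain ⟨y, hy, hxy⟩ := this
      exact ⟨_, ⟨y, hy, rfl⟩, ball_subset_closedBall hxy, hx⟩
  · rintro _ ⟨y, _, rfl⟩
    refine ⟨isClosed_closedBall.inter hc.isClosed,
      ((convex_closedBall y (ε / 2)).inter (convex_segment p q)).isPreconnected, ?_⟩
    rintro a ⟨ha, _⟩ b ⟨hb, _⟩
    have := dist_triangle_right a b y
    rw [mem_closedBall] at ha hb
    linarith

theorem HasS.image_fb {ε : ℝ} {X : Set (ℝ × ℝ)} (h : HasS ε X) (hX : IsCompact X) (b : Bool) :
    HasS (ε / 2) (fb b '' X) := by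
  obtain ⟨F, hF, rfl, h⟩ := h
  refine ⟨(fun A => fb b '' A) '' F, hF.image _, ?_, ?_⟩
  · rw [Set.sUnion_image, Set.image_sUnion, Set.sUnion_image]
  · rintro _ ⟨A, hA, rfl⟩
    obtain ⟨h1, h2, h3⟩ := h A hA
    refine ⟨?_, h2.image _ (fb_continuous b).continuousOn, ?_⟩
    · exact ((hX.of_isClosed_subset h1 (Set.subset_sUnion_of_mem hA)).image
        (fb_continuous b)).isClosed
    · rintro _ ⟨x, hx, rfl⟩ _ ⟨y, hy, rfl⟩
      have := h3 x hx y hy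
      have := fb_dist b x y
      linarith

theorem dist_le_one {x y : ℝ × ℝ} (hx : x ∈ unitSq) (hy : y ∈ unitSq) : dist x y ≤ 1 := by
  simp only [unitSq, Set.mem_Icc, Prod.le_def, Prod.fst_zero, Prod.snd_zero, Prod.fst_one,
    Prod.snd_one] at hx hy
  rw [Prod.dist_eq]
  refine max_le ?_ ?_ <;> rw [Real.dist_eq, abs_le] <;> constructor <;> linarith [hx.1.1, hx.1.2, hx.2.1, hx.2.2, hy.1.1, hy.1.2, hy.2.1, hy.2.2]

theorem hasS_psiSet (n : ℕ) : ∀ T : Set (List Bool), IsTreeOfStrings T → T.Nonempty →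
    HasS ((1 / 2) ^ n) (PsiSet T) := by
  induction n with
  | zero =>
    intro T hT hne
    refine ⟨{PsiSet T}, Set.finite_singleton _, by simp, ?_⟩
    rintro _ rfl
    refine ⟨isClosed_closure, (psiSet_connected hT hne).isPreconnected, ?_⟩
    intro x hx y hy
    simpa using dist_le_one (psiSet_subset T hx) (psiSet_subset T hy)
  | succ n ih =>
    intro T hT hne
    have hpos : (0:ℝ) < (1 / 2) ^ (n + 1) := by positivity
    have hpiece : ∀ b, HasS ((1 / 2) ^ (n + 1)) (⋃ (_ : [b] ∈ T),
        (segment ℝ rootPt (fb b rootPt) ∪ fb b '' PsiSet (subT b T))) := by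
      intro b
      by_cases hb : [b] ∈ T
      · simp only [hb, Set.iUnion_true]
        refine (hasS_segment hpos _ _).union ?_
        have := (ih (subT b T) (subT_tree hT b) ⟨[], hb⟩).image_fb (psiSet_compact _) b
        rw [pow_succ, mul_one_div]
        exact this
      · simp only [hb, Set.iUnion_false]
        exact HasS.empty _
    have hr : HasS ((1 / 2) ^ (n + 1)) {rootPt} := by
      have := hasS_segment hpos rootPt rootPt
      rwa [segment_same] at this
    rw [psiSet_decomp hT hne]
    refine hr.union ?_
    have : (⋃ b ∈ {b | [b] ∈ T}, (segment ℝ rootPt (fb b rootPt) ∪ fb b '' PsiSet (subT b T)))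
      = (⋃ (_ : [false] ∈ T), (segment ℝ rootPt (fb false rootPt) ∪
          fb false '' PsiSet (subT false T))) ∪
        (⋃ (_ : [true] ∈ T), (segment ℝ rootPt (fb true rootPt) ∪
          fb true '' PsiSet (subT true T))) := by
      ext x
      simp only [Set.mem_iUnion, Set.mem_union, Bool.exists_bool, Set.mem_ofPred_eq]
    rw [this]
    exact (hpiece false).union (hpiece true)

theorem locConn_of_hasS {X : Set (ℝ × ℝ)} (h : ∀ n : ℕ, HasS ((1 / 2) ^ n) X) :
    LocallyConnectedSpace X := by
  rw [locallyConnectedSpace_iff_connected_subsets]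
  intro x U hU
  obtain ⟨r, hr, hball⟩ := Metric.mem_nhds_iff.1 hU
  obtain ⟨n, hn⟩ := exists_pow_lt_of_lt_one hr (by norm_num : (1 / 2 : ℝ) < 1)
  obtain ⟨F, hF, hFX, hA⟩ := h n
  set V : Set (ℝ × ℝ) := ⋃₀ {A ∈ F | (x : ℝ × ℝ) ∈ A} with hV
  have hVX : V ⊆ X := by
    rw [← hFX]
    exact Set.sUnion_subset_sUnion (Set.sep_subset _ _)
  refine ⟨Subtype.val ⁻¹' V, ?_, ?_, ?_⟩
  · have hcl : IsClosed (⋃₀ {A ∈ F | (x : ℝ × ℝ) ∉ A}) :=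
      by
        rw [Set.sUnion_eq_biUnion]
        exact Set.Finite.isClosed_biUnion (hF.subset (Set.sep_subset _ _))
          fun A hA' => (hA A hA'.1).1
    have hop : IsOpen (Subtype.val ⁻¹' (⋃₀ {A ∈ F | (x : ℝ × ℝ) ∉ A})ᶜ : Set X) :=
      hcl.isOpen_compl.preimage continuous_subtype_val
    refine Filter.mem_of_superset (hop.mem_nhds ?_) ?_
    · rintro ⟨A, hA1, hA2⟩
      exact hA1.2 hA2
    · intro y hy
      have hyX : (y : ℝ × ℝ) ∈ ⋃₀ F := by rw [hFX]; exact y.2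
      obtain ⟨A, hAF, hyA⟩ := hyX
      refine ⟨A, ⟨hAF, ?_⟩, hyA⟩
      by_contra hxA
      exact hy ⟨A, ⟨hAF, hxA⟩, hyA⟩
  · rw [← Topology.IsInducing.subtypeVal.isPreconnected_image, Subtype.image_preimage_coe,
      Set.inter_eq_self_of_subset_right hVX]
    exact isPreconnected_sUnion (x : ℝ × ℝ) _ (fun A hA' => hA'.2) fun A hA' => (hA A hA'.1).2.1
  · rintro y ⟨A, ⟨hAF, hxA⟩, hyA⟩
    refine hball ?_
    rw [mem_ball, Subtype.dist_eq]
    exact ((hA A hAF).2.2 _ hyA _ hxA).trans_lt hn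

theorem Good.cut {S : Set (ℝ × ℝ)} {p : ℝ × ℝ} (h : IsPreconnected (S \ {p}))
    {f : ℝ × ℝ → ℝ} (hf : Continuous f) {c : ℝ} (hc : ∀ z ∈ S \ {p}, f z ≠ c) :
    (∀ z ∈ S \ {p}, f z < c) ∨ (∀ z ∈ S \ {p}, c < f z) := by
  by_contra hcon
  push Not at hcon
  obtain ⟨⟨a, ha, ha'⟩, b, hb, hb'⟩ := hcon
  have him : IsPreconnected (f '' (S \ {p})) := h.image f hf.continuousOn
  have := him.ordConnected.out ⟨b, hb, rfl⟩ ⟨a, ha, rfl⟩ ⟨hb', ha'⟩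
  obtain ⟨z, hz, hzc⟩ := this
  exact hc z hz hzc

theorem mem_seg {b : Bool} {z : ℝ × ℝ} (hz : z ∈ segment ℝ rootPt (fb b rootPt)) :
    z.1 = 1 / 2 + (if b then 1 else -1) * (2 / 3) * (1 - z.2) ∧ 1 / 2 ≤ z.2 ∧ z.2 ≤ 1 := by
  rw [segment_eq_image] at hz
  obtain ⟨t, ⟨h0, h1⟩, rfl⟩ := hz
  cases b <;> simp [fb, rootPt] <;> refine ⟨?_, ?_, ?_⟩ <;> linarith

theorem mem_decomp {T : Set (List Bool)} (hT : IsTreeOfStrings T) (hne : T.Nonempty)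
    {z : ℝ × ℝ} (hz : z ∈ PsiSet T) : z = rootPt ∨ ∃ b, [b] ∈ T ∧
      (z ∈ segment ℝ rootPt (fb b rootPt) ∨ z ∈ fb b '' PsiSet (subT b T)) := by
  rw [psiSet_decomp hT hne] at hz
  rcases hz with hz | hz
  · exact Or.inl hz
  · simp only [Set.mem_iUnion] at hz
    obtain ⟨b, hb, hz⟩ := hz
    exact Or.inr ⟨b, hb, hz⟩

theorem mem_fb_bounds {T : Set (List Bool)} {b : Bool} {z : ℝ × ℝ} (hz : z ∈ fb b '' PsiSet T) :
    z.2 ≤ 1 / 2 ∧ (b = false → z.1 ≤ 1 / 3) ∧ (b = true → 2 / 3 ≤ z.1) := by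
  obtain ⟨w, hw, rfl⟩ := hz
  have hw' := psiSet_subset T hw
  simp only [unitSq, Set.mem_Icc, Prod.le_def, Prod.fst_zero, Prod.snd_zero, Prod.fst_one,
    Prod.snd_one] at hw'
  obtain ⟨⟨a1, a2⟩, a3, a4⟩ := hw'
  cases b <;> simp [fb] <;> constructor <;> linarith

theorem psi_top_unique {T : Set (List Bool)} (hT : IsTreeOfStrings T) (hne : T.Nonempty)
    {z : ℝ × ℝ} (hz : z ∈ PsiSet T) (h1 : z.2 = 1) : z = rootPt := by
  rcases mem_decomp hT hne hz with h | ⟨b, _, h | h⟩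
  · exact h
  · have := (mem_seg h).1
    rw [h1] at this
    exact Prod.ext (by simpa [rootPt] using this) h1
  · have := (mem_fb_bounds h).1
    linarith

/-- A set no point of which disconnects it, inside one of the segments, is trivial. -/
theorem good_seg {S : Set (ℝ × ℝ)} (hS : ∀ p, IsPreconnected (S \ {p})) {b : Bool}
    (hsub : S ⊆ segment ℝ rootPt (fb b rootPt)) : S.Subsingleton := by
  have hinj : ∀ x ∈ segment ℝ rootPt (fb b rootPt), ∀ y ∈ segment ℝ rootPt (fb b rootPt),
      x.2 = y.2 → x = y := by
    intro x hx y hy hxy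
    refine Prod.ext ?_ hxy
    rw [(mem_seg hx).1, (mem_seg hy).1, hxy]
  intro x hx y hy
  by_contra hne
  have h2 : x.2 ≠ y.2 := fun h => hne (hinj x (hsub hx) y (hsub hy) h)
  have hm : midpoint ℝ x y ∈ segment ℝ rootPt (fb b rootPt) :=
    (convex_segment _ _).midpoint_mem (hsub hx) (hsub hy)
  have hm2 : (midpoint ℝ x y).2 = (x.2 + y.2) / 2 := by
    simp [midpoint_eq_smul_add]; ring
  have hxm : x ∈ S \ {midpoint ℝ x y} := by
    refine ⟨hx, fun h => h2 ?_⟩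
    have h : x.2 = _ := congrArg Prod.snd h
    linarith
  have hym : y ∈ S \ {midpoint ℝ x y} := by
    refine ⟨hy, fun h => h2 ?_⟩
    have h : y.2 = _ := congrArg Prod.snd h
    linarith
  rcases Good.cut (hS (midpoint ℝ x y)) continuous_snd (c := (x.2 + y.2) / 2) (by
      intro z hz h
      exact hz.2 (hinj z (hsub hz.1) _ hm (h.trans hm2.symm))) with h | h
  · have := h x hxm
    have := h y hym
    linarith
  · have := h x hxm
    have := h y hym
    linarith

theorem good_branch {T : Set (List Bool)} (hT : IsTreeOfStrings T) (hne : T.Nonempty)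
    {S : Set (ℝ × ℝ)} (hsub : S ⊆ PsiSet T) (hS : ∀ p, IsPreconnected (S \ {p})) :
    S ⊆ {rootPt} ∨ ∃ b, [b] ∈ T ∧
      S ⊆ segment ℝ rootPt (fb b rootPt) ∪ fb b '' PsiSet (subT b T) := by
  have side : ∀ z ∈ S \ {rootPt}, ∃ b, [b] ∈ T ∧
      z ∈ segment ℝ rootPt (fb b rootPt) ∪ fb b '' PsiSet (subT b T) ∧
      (b = false → z.1 < 1 / 2) ∧ (b = true → 1 / 2 < z.1) := by
    intro z hz
    rcases mem_decomp hT hne (hsub hz.1) with h | ⟨b, hb, h | h⟩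
    · exact absurd h hz.2
    · refine ⟨b, hb, Or.inl h, ?_⟩
      obtain ⟨e1, e2, e3⟩ := mem_seg h
      have : z.2 ≠ 1 := fun hh => hz.2 (psi_top_unique hT hne (hsub hz.1) hh)
      have : z.2 < 1 := lt_of_le_of_ne e3 this
      constructor <;> rintro rfl <;> simp at e1 <;> linarith
    · refine ⟨b, hb, Or.inr h, ?_⟩
      obtain ⟨_, h1, h2⟩ := mem_fb_bounds h
      exact ⟨fun hb => by linarith [h1 hb], fun hb => by linarith [h2 hb]⟩
  have hcut := Good.cut (hS rootPt) continuous_fst (c := 1 / 2) (by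
    intro z hz h
    obtain ⟨b, _, _, h1, h2⟩ := side z hz
    cases b
    · linarith [h1 rfl]
    · linarith [h2 rfl])
  by_cases hemp : S ⊆ {rootPt}
  · exact Or.inl hemp
  right
  obtain ⟨w, hw, hw'⟩ := Set.not_subset.1 hemp
  obtain ⟨b, hb, _, hb1, hb2⟩ := side w ⟨hw, hw'⟩
  refine ⟨b, hb, fun z hz => ?_⟩
  by_cases hzr : z = rootPt
  · rw [hzr]; exact Or.inl (left_mem_segment _ _ _)
  obtain ⟨c, _, hc, hc1, hc2⟩ := side z ⟨hz, hzr⟩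
  have : c = b := by
    rcases hcut with h | h
    · have u1 := h w ⟨hw, hw'⟩
      have u2 := h z ⟨hz, hzr⟩
      cases b <;> cases c <;> simp at * <;> linarith
    · have u1 := h w ⟨hw, hw'⟩
      have u2 := h z ⟨hz, hzr⟩
      cases b <;> cases c <;> simp at * <;> linarith
  rwa [← this]

theorem good_small (n : ℕ) : ∀ T : Set (List Bool), IsTreeOfStrings T → T.Nonempty →
    ∀ S ⊆ PsiSet T, (∀ p, IsPreconnected (S \ {p})) →
    ∀ x ∈ S, ∀ y ∈ S, dist x y ≤ (1 / 2) ^ n := by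
  induction n with
  | zero =>
    intro T hT hne S hsub hS x hx y hy
    simpa using dist_le_one (psiSet_subset T (hsub hx)) (psiSet_subset T (hsub hy))
  | succ n ih =>
    intro T hT hne S hsub hS x hx y hy
    have hpos : (0:ℝ) ≤ (1 / 2) ^ (n + 1) := by positivity
    rcases good_branch hT hne hsub hS with h | ⟨b, hb, h⟩
    · have : x = y := (h hx).trans (h hy).symm
      rw [this, dist_self]; exact hpos
    have hT' := subT_tree hT b
    have hne' : (subT b T).Nonempty := ⟨[], hb⟩
    have hq2 : (fb b rootPt).2 = 1 / 2 := by simp [fb, rootPt]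
    have hcut := Good.cut (hS (fb b rootPt)) continuous_snd (c := 1 / 2) (by
      intro z hz hz2
      apply hz.2
      rcases h hz.1 with h' | ⟨w, hw, rfl⟩
      · have e1 := (mem_seg h').1
        have e2 := (mem_seg (right_mem_segment ℝ rootPt (fb b rootPt))).1
        refine Prod.ext ?_ (hz2.trans hq2.symm)
        rw [e1, e2, hz2, hq2]
      · have : w.2 = 1 := by
          have : w.2 / 2 = 1 / 2 := hz2
          linarith
        rw [psi_top_unique hT' hne' hw this]; rfl)
    rcases hcut with hc | hc
    · have hS2 : S ⊆ fb b '' PsiSet (subT b T) := by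
        intro z hz
        by_cases hzq : z = fb b rootPt
        · exact ⟨rootPt, root_mem hT' hne', hzq.symm⟩
        have := hc z ⟨hz, hzq⟩
        rcases h hz with h' | h'
        · linarith [(mem_seg h').2.1]
        · exact h'
      have key := ih (subT b T) hT' hne' (gb b '' S) (by
        rintro _ ⟨z, hz, rfl⟩
        obtain ⟨w, hw, rfl⟩ := hS2 hz
        rwa [gb_fb]) (by
        intro p
        have : gb b '' S \ {p} = gb b '' (S \ {fb b p}) := by
          ext z
          constructor
          · rintro ⟨⟨w, hw, rfl⟩, hz⟩
            refine ⟨w, ⟨hw, fun hwp => hz ?_⟩, rfl⟩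
            rw [Set.mem_singleton_iff] at hwp ⊢
            rw [hwp, gb_fb]
          · rintro ⟨w, ⟨hw, hwp⟩, rfl⟩
            refine ⟨⟨w, hw, rfl⟩, fun hz => hwp ?_⟩
            rw [Set.mem_singleton_iff] at hz ⊢
            rw [← hz, fb_gb]
        rw [this]
        exact (hS _).image _ (gb_continuous b).continuousOn)
        (gb b x) ⟨x, hx, rfl⟩ (gb b y) ⟨y, hy, rfl⟩
      have := fb_dist b (gb b x) (gb b y)
      rw [fb_gb, fb_gb] at this
      rw [pow_succ]
      linarith
    · have hS2 : S ⊆ segment ℝ rootPt (fb b rootPt) := by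
        intro z hz
        by_cases hzq : z = fb b rootPt
        · rw [hzq]; exact right_mem_segment _ _ _
        have := hc z ⟨hz, hzq⟩
        rcases h hz with h' | h'
        · exact h'
        · linarith [(mem_fb_bounds h').1]
      rw [good_seg hS hS2 hx hy, dist_self]; exact hpos

theorem circle_compl (v : unitCircle) : IsPreconnected ({v}ᶜ : Set unitCircle) := by
  have hv : ‖(v : EuclideanSpace ℝ (Fin 2))‖ = 1 := by
    have := v.2
    simpa [unitCircle] using this
  have h := (isPreconnected_univ).image (stereographic hv).symm
    (by simpa using (stereographic hv).continuousOn_symm)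
  have e : (stereographic hv).symm '' Set.univ = {v}ᶜ := by
    have := (stereographic hv).symm_image_target_eq_source
    rwa [stereographic_target, stereographic_source] at this
  rw [e] at h
  exact h

theorem circle_preconnected : IsPreconnected unitCircle := by
  refine isPreconnected_sphere ?_ _ _
  rw [← Module.finrank_eq_rank]
  simp

theorem no_circle {T : Set (List Bool)} (hT : IsTreeOfStrings T) (hne : T.Nonempty)
    (S : Set (ℝ × ℝ)) (hS : S ⊆ PsiSet T) : IsEmpty (↥S ≃ₜ ↥unitCircle) := by
  refine ⟨fun e => ?_⟩
  have hgood : ∀ p, IsPreconnected (S \ {p}) := by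
    intro p
    by_cases hp : p ∈ S
    · have h := (circle_compl (e ⟨p, hp⟩)).image (fun z => (e.symm z : ℝ × ℝ))
        (by fun_prop)
      convert h using 1
      ext z
      constructor
      · rintro ⟨hz, hzp⟩
        refine ⟨e ⟨z, hz⟩, fun hh => hzp ?_, by simp⟩
        have := e.injective hh
        exact congrArg Subtype.val this
      · rintro ⟨w, hw, rfl⟩
        refine ⟨(e.symm w).2, fun hh => hw ?_⟩
        have : e.symm w = ⟨p, hp⟩ := Subtype.ext hh
        rw [← this]; simp
    · rw [Set.sdiff_singleton_eq_self hp]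
      have : PreconnectedSpace unitCircle := Subtype.preconnectedSpace circle_preconnected
      have h := (isPreconnected_univ (α := unitCircle)).image (fun z => (e.symm z : ℝ × ℝ))
        (by fun_prop)
      convert h using 1
      ext z
      constructor
      · intro hz
        exact ⟨e ⟨z, hz⟩, trivial, by simp⟩
      · rintro ⟨w, _, rfl⟩
        exact (e.symm w).2
  have hsub : ∀ x ∈ S, ∀ y ∈ S, x = y := by
    intro x hx y hy
    by_contra hxy
    have hd : 0 < dist x y := dist_pos.2 hxy
    obtain ⟨n, hn⟩ := exists_pow_lt_of_lt_one hd (by norm_num : (1 / 2 : ℝ) < 1)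
    exact absurd (good_small n T hT hne S hS hgood x hx y hy) (not_le.2 hn)
  let v : EuclideanSpace ℝ (Fin 2) := EuclideanSpace.single 0 1
  have hv : ‖v‖ = 1 := by simp [v]
  have hv1 : v ∈ unitCircle := by simpa [unitCircle] using hv
  have hv2 : -v ∈ unitCircle := by simpa [unitCircle] using hv
  have h := hsub _ (e.symm ⟨v, hv1⟩).2 _ (e.symm ⟨-v, hv2⟩).2
  have h' := e.symm.injective (Subtype.ext h)
  have h'' : v = -v := congrArg Subtype.val h'
  have : v = 0 := by
    have h2 : (2 : ℝ) • v = 0 := by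
      rw [two_smul]
      nth_rewrite 2 [h'']
      exact add_neg_cancel v
    exact (smul_eq_zero.1 h2).resolve_left (by norm_num)
  rw [this] at hv
  simp at hv

theorem psiSet_isDendrite (T : Set (List Bool)) (hT : IsTreeOfStrings T)
    (hne : T.Nonempty) : IsDendrite (PsiSet T) := by
  exact ⟨⟨psiSet_compact T, psiSet_connected hT hne⟩,
    locConn_of_hasS fun n => hasS_psiSet n T hT hne, fun S hS => no_circle hT hne S hS⟩
end
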